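/- arXiv:2208.14126 — 2 statements merged into one kernel-verified Lean document; each statement's English description precedes it below -/
import Mathlib

section
/- There exists a minimal graph story S = (G, ω, τ) such that: (i) G is planar; (ii) S is realizable; and (iii) S does not admit a supporting embedding. In particular this holds for a triconnected planar graph G on 10 vertices with ω = 8, where G has a unique planar embedding up to a flip and the choice of the external face, yet in any realization of S some drawing Γ_i has an embedding that is not the restriction of that embedding of G to G_i. -/
open Set

namespace GraphStories

/-- Points of the plane. -/
abbrev Pt : Type := ℝ × ℝ

/-- The vertex set of the window graph `G_i` (time `i` is 1-indexed, vertex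
`v_j : Fin n` sits at position `j+1` in the ordering `τ`):
`v_j ∈ G_i` iff `max{1, i-ω+1} ≤ j+1 ≤ i`. -/
def window (n ω i : ℕ) : Set (Fin n) := {j | j.val + 1 ≤ i ∧ i ≤ j.val + ω}

/-- All edges of `G` are visible: `|i - j| < ω` for every edge `(v_i, v_j)`. -/
def Visible (n ω : ℕ) (G : SimpleGraph (Fin n)) : Prop :=
  ∀ u v : Fin n, G.Adj u v → u.val < v.val + ω ∧ v.val < u.val + ω

/-- The data of a drawing: a position for every vertex, and a parametrized curve
for every (ordered) pair of vertices (only the data attached to the vertices and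
edges of the relevant subgraph is meaningful). -/
structure RawDrawing (n : ℕ) where
  pos : Fin n → Pt
  curve : Fin n → Fin n → ℝ → Pt

/-- `γ` (restricted to `[0,1]`) is a Jordan arc from `a` to `b`. -/
def IsArcFrom (γ : ℝ → Pt) (a b : Pt) : Prop :=
  ContinuousOn γ (Icc 0 1) ∧ InjOn γ (Icc 0 1) ∧ γ 0 = a ∧ γ 1 = b

/-- The set of points of an arc. -/
def arcBody (γ : ℝ → Pt) : Set Pt := γ '' Icc (0 : ℝ) 1

/-- The set of interior points of an arc (endpoints removed). -/
def arcInterior (γ : ℝ → Pt) : Set Pt := γ '' Ioo (0 : ℝ) 1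

/-- `D` is a planar drawing of the subgraph of `G` induced by `S`, with the
vertices mapped to (distinct) points of `P` and the edges drawn as Jordan arcs
which pairwise do not intersect except at common endpoints. -/
structure IsPlanarDrawingOn (n : ℕ) (G : SimpleGraph (Fin n)) (S : Set (Fin n))
    (P : Set Pt) (D : RawDrawing n) : Prop where
  pos_mem : ∀ v ∈ S, D.pos v ∈ P
  pos_inj : InjOn D.pos S
  curve_symm : ∀ u v : Fin n, D.curve v u = fun t => D.curve u v (1 - t)
  arc : ∀ u ∈ S, ∀ v ∈ S, G.Adj u v → IsArcFrom (D.curve u v) (D.pos u) (D.pos v)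
  vertex_off_arc : ∀ u ∈ S, ∀ v ∈ S, G.Adj u v → ∀ w ∈ S,
      D.pos w ∉ arcInterior (D.curve u v)
  no_cross : ∀ u ∈ S, ∀ v ∈ S, ∀ x ∈ S, ∀ y ∈ S, G.Adj u v → G.Adj x y →
      s(u, v) ≠ s(x, y) →
      arcInterior (D.curve u v) ∩ arcInterior (D.curve x y) = ∅

/-- `D` is a planar drawing of the subgraph of `G` induced by `S` (anywhere in
the plane). -/
def IsPlanarDrawing (n : ℕ) (G : SimpleGraph (Fin n)) (S : Set (Fin n))
    (D : RawDrawing n) : Prop :=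
  IsPlanarDrawingOn n G S univ D

/-- A realization of the graph story `(G, ω, k, τ)` on the point set `P`:
a sequence `Γ_1, …, Γ_n` of planar drawings of the window graphs `G_1, …, G_n`
on `P` (property R1) such that consecutive drawings restrict identically
(vertex positions and edge arcs) to the common subgraph `G_{i-1} ∩ G_i`
(property R2). -/
structure Realization (n ω : ℕ) (G : SimpleGraph (Fin n)) (P : Set Pt) where
  Γ : ℕ → RawDrawing n
  planar : ∀ i, 1 ≤ i → i ≤ n → IsPlanarDrawingOn n G (window n ω i) P (Γ i)
  pos_eq : ∀ i, 2 ≤ i → i ≤ n → ∀ v ∈ window n ω (i - 1) ∩ window n ω i,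
      (Γ i).pos v = (Γ (i - 1)).pos v
  curve_eq : ∀ i, 2 ≤ i → i ≤ n →
      ∀ u ∈ window n ω (i - 1) ∩ window n ω i,
      ∀ v ∈ window n ω (i - 1) ∩ window n ω i,
      G.Adj u v → (Γ i).curve u v = (Γ (i - 1)).curve u v

/-- The story `(G, ω, k, τ)` admits a realization on the point set `P`. -/
def RealizableOn (n ω : ℕ) (G : SimpleGraph (Fin n)) (P : Set Pt) : Prop :=
  Nonempty (Realization n ω G P)

/-- The story `(G, ω, k, τ)` is realizable: it admits a realization on some set
of `ω + k` points. -/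
def Realizable (n ω k : ℕ) (G : SimpleGraph (Fin n)) : Prop :=
  ∃ P : Finset Pt, P.card = ω + k ∧ RealizableOn n ω G ↑P


/-- The set of points of the plane used by the drawing `D` of the subgraph of
`G` induced by `S` (vertex points and edge arcs). -/
def drawingImage (n : ℕ) (G : SimpleGraph (Fin n)) (S : Set (Fin n))
    (D : RawDrawing n) : Set Pt :=
  (D.pos '' S) ∪
    ⋃ (u : Fin n) (v : Fin n) (_ : u ∈ S) (_ : v ∈ S) (_ : G.Adj u v),
      arcBody (D.curve u v)

/-- The two drawings `D, D'` of the subgraph of `G` induced by `S`, carrying the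
respective sets `Q, Q'` of marked points, determine the same (face-weighted)
planar embedding: some self-homeomorphism of the plane maps the first drawing
onto the second, vertex-by-vertex and arc-by-arc, and maps the first set of
marked points onto the second (so corresponding faces carry equally many
marked points).  Weights of faces are represented by marked points lying
inside them. -/
def SameMarkedEmbedding (n : ℕ) (G : SimpleGraph (Fin n)) (S : Set (Fin n))
    (D D' : RawDrawing n) (Q Q' : Set Pt) : Prop :=
  ∃ φ : Homeomorph Pt Pt,
    (∀ v ∈ S, φ (D.pos v) = D'.pos v) ∧
    (∀ u ∈ S, ∀ v ∈ S, G.Adj u v →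
        φ '' arcBody (D.curve u v) = arcBody (D'.curve u v)) ∧
    φ '' Q = Q'

/-- A face-`k`-weighted planar embedding of the subgraph of `G` induced by `S`,
represented by a planar drawing together with `k` marked points placed off the
drawing (the weight of a face is the number of marked points it contains). -/
structure WeightedDrawing (n k : ℕ) (G : SimpleGraph (Fin n)) (S : Set (Fin n)) where
  D : RawDrawing n
  planar : IsPlanarDrawing n G S D
  marks : Finset Pt
  marks_card : marks.card = k
  marks_off : ∀ p ∈ marks, p ∉ drawingImage n G S D

/-- Compatibility of two consecutive face-`k`-weighted planar embeddings
`W` of `G_{i-1}` and `W'` of `G_i`: removing the vertex `v_{i-ω}` from `W`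
(replacing it by one extra marked point, accounting for the weight increase of
the merged face) yields the same face-`(k+1)`-weighted planar embedding of
`G_{i-1} ∩ G_i` as removing `v_i` from `W'`. -/
def CompatiblePair (n ω k : ℕ) (G : SimpleGraph (Fin n)) (i : ℕ)
    (W : WeightedDrawing n k G (window n ω (i - 1)))
    (W' : WeightedDrawing n k G (window n ω i)) : Prop :=
  ∃ a b : Fin n, a.val + 1 + ω = i ∧ b.val + 1 = i ∧
    SameMarkedEmbedding n G (window n ω (i - 1) ∩ window n ω i) W.D W'.D
      (↑W.marks ∪ {W.D.pos a}) (↑W'.marks ∪ {W'.D.pos b})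

/-- `G` (on `Fin n`) is a planar graph: it admits a planar drawing. -/
def PlanarGraph (n : ℕ) (G : SimpleGraph (Fin n)) : Prop :=
  ∃ D : RawDrawing n, IsPlanarDrawing n G univ D

/-- `G` is triconnected: it has at least `4` vertices and removing any at most
two vertices leaves it connected. -/
def ThreeConnected (n : ℕ) (G : SimpleGraph (Fin n)) : Prop :=
  4 ≤ n ∧ ∀ s : Finset (Fin n), s.card ≤ 2 →
    (SimpleGraph.induce {v : Fin n | v ∉ s} G).Connected

/-- The (drawing representing the) planar embedding `Δ` of `G` is a supporting
embedding for the minimal story `(G, ω, τ)`: the story admits a realization in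
which, for every `i`, the embedding of the `i`-th drawing is the restriction of
the embedding of `Δ` to `G_i` (expressed by the existence of a plane
homeomorphism matching the two drawings of `G_i`, i.e. the two drawings are
equivalent). -/
def IsSupportingDrawing (n ω : ℕ) (G : SimpleGraph (Fin n)) (Δ : RawDrawing n) : Prop :=
  IsPlanarDrawing n G univ Δ ∧
  ∃ P : Finset Pt, P.card = ω + 0 ∧
    ∃ R : Realization n ω G ↑P,
      ∀ i, 1 ≤ i → i ≤ n →
        SameMarkedEmbedding n G (window n ω i) Δ (R.Γ i) ∅ ∅

/-!
In a realization of a minimal story a vertex `b` enters at the point that the vertex `a = b - ω` has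
just left. If `Δ` supports the story, composing the homeomorphisms that identify the windows of `Δ`
before and after this moment with the realization therefore gives a homeomorphism of the plane that
moves `a` to `b` in `Δ` and fixes every vertex and preserves every edge present at both times. Let
`a` and `b` both be joined to the corners of a triangle of common vertices, and `a` to a further
common vertex `z`. The edge `az` avoids the triangle, and so does its image, which joins `b` to `z`.
Hence `a` and `b` lie on the same side of the triangle in `Δ`, which would make `K₅` planar.

To see that `K₅` is not planar, suppose that its edges are drawn so that disjoint edges do not meet,
and let `W p` be the change of `log (z - p)` along the triangle `012`. A logarithm of the difference
of points on two disjoint edges exists on their whole product, so the changes along the sides of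
this square add up to zero. Summing over suitable pairs of edges gives `W 3 = W 4` and
`W 3 + W 4 = 2 A`, where `A` is the total change along the three edges of the triangle as seen from
their opposite corners. But `exp (W 3) = 1`, whereas `exp A = -1`.
-/

section Logarithms

theorem exists_continuous_log {E : Type*} [TopologicalSpace E] [SimplyConnectedSpace E]
    [LocallyPathConnectedSpace E] {f : E → ℂ} (hf : Continuous f) (h0 : ∀ z, f z ≠ 0) :
    ∃ L : E → ℂ, Continuous L ∧ ∀ z, Complex.exp (L z) = f z := by
  obtain ⟨z₀⟩ : Nonempty E := inferInstance
  obtain ⟨L, ⟨-, hL⟩, -⟩ := Complex.isCoveringMapOn_exp.existsUnique_continuousMap_lifts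
    (⟨f, hf⟩ : C(E, ℂ)) (Complex.exp_log (h0 z₀)) h0
  exact ⟨L, L.continuous, congrFun hL⟩

theorem sub_eq_sub_of_exp_eq {E : Type*} [TopologicalSpace E] [PreconnectedSpace E]
    {L L' : E → ℂ} (hL : Continuous L) (hL' : Continuous L')
    (h : ∀ z, Complex.exp (L z) = Complex.exp (L' z)) (z w : E) :
    L z - L w = L' z - L' w := by
  have hexp : ∀ z, Complex.exp (L z - L' z) = 1 := fun z => by
    rw [Complex.exp_sub, h, div_self (Complex.exp_ne_zero _)]
  have hconst : L z - L' z = L w - L' w :=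
    Complex.isCoveringMap_exp.const_of_comp (hL.sub hL') (fun a b => by simp [hexp]) z w
  linear_combination hconst

/-- The total change of a continuous logarithm of `z - p` as `z` runs along `γ`. The value is
arbitrary if `γ` passes through `p`. -/
noncomputable def logChange {a b : ℂ} (γ : Path a b) (p : ℂ) : ℂ :=
  Classical.epsilon fun w => ∃ L : ℝ → ℂ, Continuous L ∧
    (∀ t, Complex.exp (L t) = γ.extend t - p) ∧ w = L 1 - L 0

variable {a b c d p : ℂ}

theorem logChange_eq {γ : Path a b} {L : ℝ → ℂ} (hL : Continuous L)
    (h : ∀ t, Complex.exp (L t) = γ.extend t - p) : logChange γ p = L 1 - L 0 := by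
  obtain ⟨L', hL', h', heq⟩ := Classical.epsilon_spec
    (p := fun w => ∃ L : ℝ → ℂ, Continuous L ∧
      (∀ t, Complex.exp (L t) = γ.extend t - p) ∧ w = L 1 - L 0) ⟨_, L, hL, h, rfl⟩
  exact heq.trans (sub_eq_sub_of_exp_eq hL' hL (fun t => by rw [h', h]) 1 0)

theorem logChange_eq_of_exp_eq_sub {γ : Path a b} {L : ℝ → ℂ} (hL : Continuous L)
    (h : ∀ t, Complex.exp (L t) = p - γ.extend t) : logChange γ p = L 1 - L 0 := by
  rw [logChange_eq (L := fun t => L t + Real.pi * Complex.I) (by fun_prop)]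
  · ring
  · intro t
    rw [Complex.exp_add, h, Complex.exp_pi_mul_I]
    ring

theorem exp_logChange {γ : Path a b} (hp : p ∉ range γ) :
    Complex.exp (logChange γ p) = (b - p) / (a - p) := by
  have hne : ∀ t, γ.extend t - p ≠ 0 := fun t =>
    sub_ne_zero.2 fun h => hp (γ.extend_range ▸ ⟨t, h⟩)
  obtain ⟨L, hL, h⟩ := exists_continuous_log (by fun_prop) hne
  rw [logChange_eq hL h, Complex.exp_sub, h, h, γ.extend_one, γ.extend_zero]

theorem exp_logChange_triangle {α : Path a b} {β : Path b c} {γ : Path c a}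
    (hα : p ∉ range α) (hβ : p ∉ range β) (hγ : p ∉ range γ) :
    Complex.exp (logChange α p + logChange β p + logChange γ p) = 1 := by
  have ha : a - p ≠ 0 := sub_ne_zero.2 fun h => hα ⟨0, α.source.trans h⟩
  have hb : b - p ≠ 0 := sub_ne_zero.2 fun h => hβ ⟨0, β.source.trans h⟩
  have hc : c - p ≠ 0 := sub_ne_zero.2 fun h => hγ ⟨0, γ.source.trans h⟩
  rw [Complex.exp_add, Complex.exp_add, exp_logChange hα, exp_logChange hβ, exp_logChange hγ]
  field_simp

theorem exp_logChange_opposite {α : Path a b} {β : Path b c} {γ : Path c a}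
    (hα : c ∉ range α) (hβ : a ∉ range β) (hγ : b ∉ range γ) :
    Complex.exp (logChange α c + logChange β a + logChange γ b) = -1 := by
  have hac : a - c ≠ 0 := sub_ne_zero.2 fun h => hα ⟨0, α.source.trans h⟩
  have hba : b - a ≠ 0 := sub_ne_zero.2 fun h => hβ ⟨0, β.source.trans h⟩
  have hcb : c - b ≠ 0 := sub_ne_zero.2 fun h => hγ ⟨0, γ.source.trans h⟩
  rw [Complex.exp_add, Complex.exp_add, exp_logChange hα, exp_logChange hβ, exp_logChange hγ,
    ← neg_sub c b, ← neg_sub a c, ← neg_sub b a]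
  field_simp

-- Both sides measure the change of a logarithm of `δ t - γ s` along the boundary of the square.
theorem logChange_add_logChange_of_disjoint {γ : Path a b} {δ : Path c d}
    (h : Disjoint (range γ) (range δ)) :
    logChange δ a + logChange γ d = logChange γ c + logChange δ b := by
  have hne : ∀ z : ℝ × ℝ, δ.extend z.2 - γ.extend z.1 ≠ 0 := fun z =>
    sub_ne_zero.2 fun heq => h.ne_of_mem (γ.extend_range ▸ mem_range_self z.1)
      (δ.extend_range ▸ mem_range_self z.2) heq.symm
  obtain ⟨L, hL, hexp⟩ := exists_continuous_log (by fun_prop) hne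
  rw [logChange_eq (γ := δ) (p := a) (L := fun t => L (0, t)) (by fun_prop) (by simp [hexp]),
    logChange_eq (γ := δ) (p := b) (L := fun t => L (1, t)) (by fun_prop) (by simp [hexp]),
    logChange_eq_of_exp_eq_sub (γ := γ) (p := c) (L := fun t => L (t, 0)) (by fun_prop)
      (by simp [hexp]),
    logChange_eq_of_exp_eq_sub (γ := γ) (p := d) (L := fun t => L (t, 1)) (by fun_prop)
      (by simp [hexp])]
  ring

end Logarithms

section CompleteGraph

theorem exists_not_disjoint_range_of_paths {v : Fin 5 → ℂ} (γ : ∀ i j, Path (v i) (v j)) :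
    ∃ i j k l, [i, j, k, l].Nodup ∧ ¬ Disjoint (range (γ i j)) (range (γ k l)) := by
  by_contra! h
  have square : ∀ i j k l, [i, j, k, l].Nodup → logChange (γ k l) (v i) + logChange (γ i j) (v l)
      = logChange (γ i j) (v k) + logChange (γ k l) (v j) := fun i j k l hd =>
    logChange_add_logChange_of_disjoint (h i j k l hd)
  have avoid : ∀ i j k l, [i, j, k, l].Nodup → v k ∉ range (γ i j) := fun i j k l hd hk =>
    (h i j k l hd).ne_of_mem hk ⟨0, (γ k l).source⟩ rfl
  let W (p : ℂ) : ℂ := logChange (γ 0 1) p + logChange (γ 1 2) p + logChange (γ 2 0) p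
  let A : ℂ := logChange (γ 0 1) (v 2) + logChange (γ 1 2) (v 0) + logChange (γ 2 0) (v 1)
  have eq_W : W (v 3) = W (v 4) := by
    linear_combination square 3 4 0 1 (by decide) + square 3 4 1 2 (by decide)
      + square 3 4 2 0 (by decide)
  have sum_W : W (v 3) + W (v 4) = 2 * A := by
    linear_combination square 3 2 0 1 (by decide) + square 3 0 1 2 (by decide)
      + square 3 1 2 0 (by decide) + square 4 2 0 1 (by decide) + square 4 0 1 2 (by decide)
      + square 4 1 2 0 (by decide) + square 3 0 4 1 (by decide) + square 3 1 4 2 (by decide)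
      + square 3 2 4 0 (by decide) - square 3 0 4 2 (by decide) - square 3 1 4 0 (by decide)
      - square 3 2 4 1 (by decide)
  have exp_W : Complex.exp (W (v 3)) = 1 := exp_logChange_triangle
    (avoid 0 1 3 4 (by decide)) (avoid 1 2 3 4 (by decide)) (avoid 2 0 3 4 (by decide))
  have exp_A : Complex.exp A = -1 := exp_logChange_opposite
    (avoid 0 1 2 3 (by decide)) (avoid 1 2 0 3 (by decide)) (avoid 2 0 1 3 (by decide))
  have hWA : W (v 3) = A := by linear_combination sum_W / 2 + eq_W / 2
  rw [hWA, exp_A] at exp_W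
  norm_num at exp_W

/-- The complete graph `K₅` is not planar, with each edge allowed to run anywhere inside a given
region. -/
theorem exists_not_disjoint_of_joinedIn {v : Fin 5 → Pt} {B : Fin 5 → Fin 5 → Set Pt}
    (hB : ∀ i j, i ≠ j → JoinedIn (B i j) (v i) (v j)) :
    ∃ i j k l, [i, j, k, l].Nodup ∧ ¬ Disjoint (B i j) (B k l) := by
  have hpath : ∀ i j, ∃ γ : Path (v i) (v j), i ≠ j → range γ ⊆ B i j := by
    intro i j
    rcases eq_or_ne i j with rfl | hij
    · exact ⟨Path.refl _, fun h => absurd rfl h⟩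
    · obtain ⟨γ, hγ⟩ := hB i j hij
      exact ⟨γ, fun _ => range_subset_iff.2 hγ⟩
  choose γ hγ using hpath
  let e := Complex.equivRealProdCLM.symm.toHomeomorph
  obtain ⟨i, j, k, l, hd, hmeet⟩ :=
    exists_not_disjoint_range_of_paths fun i j => (γ i j).map e.continuous
  refine ⟨i, j, k, l, hd, fun hB => hmeet ?_⟩
  have hij : i ≠ j := by rintro rfl; simp at hd
  have hkl : k ≠ l := by rintro rfl; simp at hd
  simp only [Path.map_coe, range_comp, disjoint_image_iff e.injective]
  exact hB.mono (hγ i j hij) (hγ k l hkl)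

end CompleteGraph

section PlanarDrawings

variable {n : ℕ} {G : SimpleGraph (Fin n)} {S T : Set (Fin n)} {P : Set Pt} {D : RawDrawing n}

theorem IsArcFrom.arcBody_eq {γ : ℝ → Pt} {a b : Pt} (h : IsArcFrom γ a b) :
    arcBody γ = arcInterior γ ∪ {a, b} := by
  rw [arcBody, ← Ioo_union_both zero_le_one, image_union, image_pair, h.2.2.1, h.2.2.2, arcInterior]

theorem IsArcFrom.joinedIn_arcBody {γ : ℝ → Pt} {a b : Pt} (h : IsArcFrom γ a b) :
    JoinedIn (arcBody γ) a b :=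
  JoinedIn.ofLine h.1 h.2.2.1 h.2.2.2 Subset.rfl

theorem arcBody_subset_drawingImage {u v : Fin n} (hu : u ∈ S) (hv : v ∈ S) (huv : G.Adj u v) :
    arcBody (D.curve u v) ⊆ drawingImage n G S D := fun _ hp =>
  Or.inr (mem_iUnion₂.2 ⟨u, v, mem_iUnion₂.2 ⟨hu, hv, mem_iUnion.2 ⟨huv, hp⟩⟩⟩)

theorem drawingImage_subset_iff {A : Set Pt} :
    drawingImage n G S D ⊆ A ↔ (∀ v ∈ S, D.pos v ∈ A) ∧
      ∀ u ∈ S, ∀ v ∈ S, G.Adj u v → arcBody (D.curve u v) ⊆ A := by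
  simp only [drawingImage, union_subset_iff, image_subset_iff, iUnion_subset_iff]
  exact ⟨fun h => ⟨h.1, fun u hu v hv => h.2 u v hu hv⟩,
    fun h => ⟨h.1, fun u v hu hv => h.2 u hu v hv⟩⟩

namespace IsPlanarDrawingOn

variable (hD : IsPlanarDrawingOn n G S P D) {u v x y : Fin n}
include hD

theorem pos_notMem_arcBody (hu : u ∈ S) (hv : v ∈ S) (huv : G.Adj u v) (hx : x ∈ S)
    (hxu : x ≠ u) (hxv : x ≠ v) : D.pos x ∉ arcBody (D.curve u v) := by
  rw [(hD.arc u hu v hv huv).arcBody_eq]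
  rintro (h | h | h)
  · exact hD.vertex_off_arc u hu v hv huv x hx h
  · exact hxu (hD.pos_inj hx hu h)
  · exact hxv (hD.pos_inj hx hv h)

theorem disjoint_arcBody (hu : u ∈ S) (hv : v ∈ S) (hx : x ∈ S) (hy : y ∈ S)
    (huv : G.Adj u v) (hxy : G.Adj x y) (hux : u ≠ x) (huy : u ≠ y) (hvx : v ≠ x) (hvy : v ≠ y) :
    Disjoint (arcBody (D.curve u v)) (arcBody (D.curve x y)) := by
  have hinterior : Disjoint (arcInterior (D.curve u v)) (arcInterior (D.curve x y)) :=
    disjoint_iff_inter_eq_empty.2 <| hD.no_cross u hu v hv x hx y hy huv hxy <| by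
      simp [hux, huy]
  rw [(hD.arc u hu v hv huv).arcBody_eq, disjoint_union_left]
  constructor
  · rw [(hD.arc x hx y hy hxy).arcBody_eq, disjoint_union_right]
    simp [hinterior, hD.vertex_off_arc u hu v hv huv x hx, hD.vertex_off_arc u hu v hv huv y hy]
  · simp [hD.pos_notMem_arcBody hx hy hxy hu hux huy, hD.pos_notMem_arcBody hx hy hxy hv hvx hvy]

theorem joinedIn_compl_drawingImage (hTS : T ⊆ S) (hu : u ∈ S \ T) (hv : v ∈ S \ T)
    (huv : G.Adj u v) : JoinedIn (drawingImage n G T D)ᶜ (D.pos u) (D.pos v) := by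
  refine (hD.arc u hu.1 v hv.1 huv).joinedIn_arcBody.mono (subset_compl_comm.1 ?_)
  have hne : ∀ {x w}, w ∈ S \ T → x ∈ T → w ≠ x := fun hw hx h => hw.2 (h ▸ hx)
  refine drawingImage_subset_iff.2 ⟨fun x hx => ?_, fun x hx y hy hxy => ?_⟩
  · exact hD.pos_notMem_arcBody hu.1 hv.1 huv (hTS hx) (hne hu hx).symm (hne hv hx).symm
  · exact (hD.disjoint_arcBody hu.1 hv.1 (hTS hx) (hTS hy) huv hxy (hne hu hx) (hne hu hy)
      (hne hv hx) (hne hv hy)).subset_compl_left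

end IsPlanarDrawingOn

/-- The complete graph on five vertices without the edge between `3` and `4`: two vertices, both
joined to all vertices of the triangle on `{3, 4}ᶜ`. -/
abbrev K5DeleteEdge : SimpleGraph (Fin 5) := (⊤ : SimpleGraph (Fin 5)).deleteEdges {s(3, 4)}

-- A path in `Tᶜ` would serve as the missing edge of `K₅`.
theorem not_joinedIn_compl_of_disjoint {v : Fin 5 → Pt} {B : Fin 5 → Fin 5 → Set Pt} {T : Set Pt}
    (hB : ∀ i j, K5DeleteEdge.Adj i j → JoinedIn (B i j) (v i) (v j))
    (hdisj : ∀ i j k l, K5DeleteEdge.Adj i j → K5DeleteEdge.Adj k l → [i, j, k, l].Nodup →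
      Disjoint (B i j) (B k l))
    (hT : ∀ i ∈ ({3, 4}ᶜ : Set (Fin 5)), ∀ j ∈ ({3, 4}ᶜ : Set (Fin 5)), i ≠ j → B i j ⊆ T) :
    ¬ JoinedIn Tᶜ (v 3) (v 4) := by
  intro hJ
  have adj : ∀ {i j : Fin 5}, i ≠ j → s(i, j) ≠ s(3, 4) → K5DeleteEdge.Adj i j := fun hij he =>
    SimpleGraph.deleteEdges_adj.2 ⟨hij, he⟩
  have opposite : ∀ i j k l : Fin 5, [i, j, k, l].Nodup → s(i, j) = s(3, 4) →
      s(k, l) ≠ s(3, 4) ∧ k ∈ ({3, 4}ᶜ : Set (Fin 5)) ∧ l ∈ ({3, 4}ᶜ : Set (Fin 5)) ∧ k ≠ l := by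
    decide
  obtain ⟨i, j, k, l, hd, hmeet⟩ := exists_not_disjoint_of_joinedIn (v := v)
    (B := fun i j => if s(i, j) = s(3, 4) then Tᶜ else B i j) <| by
      intro i j hij
      split_ifs with he
      · rcases Sym2.eq_iff.1 he with ⟨rfl, rfl⟩ | ⟨rfl, rfl⟩
        exacts [hJ, hJ.symm]
      · exact hB i j (adj hij he)
  apply hmeet
  by_cases he : s(i, j) = s(3, 4)
  · obtain ⟨he', hk, hl, hkl⟩ := opposite i j k l hd he
    rw [if_pos he, if_neg he', disjoint_compl_left_iff_subset]
    exact hT k hk l hl hkl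
  · rw [if_neg he]
    split_ifs with he'
    · have hd' : [k, l, i, j].Nodup :=
        (List.perm_append_comm (l₁ := [i, j]) (l₂ := [k, l])).nodup hd
      obtain ⟨-, hi, hj, hij⟩ := opposite k l i j hd' he'
      exact disjoint_compl_right_iff_subset.2 (hT i hi j hj hij)
    · have hij : i ≠ j := by rintro rfl; simp at hd
      have hkl : k ≠ l := by rintro rfl; simp at hd
      exact hdisj i j k l (adj hij he) (adj hkl he') hd

theorem IsPlanarDrawingOn.not_joinedIn_compl_triangle (hD : IsPlanarDrawingOn n G S P D)
    (f : SimpleGraph.Copy K5DeleteEdge G) (hf : ∀ i, f i ∈ S) :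
    ¬ JoinedIn (drawingImage n G (f '' {3, 4}ᶜ) D)ᶜ (D.pos (f 3)) (D.pos (f 4)) := by
  refine not_joinedIn_compl_of_disjoint (v := fun i => D.pos (f i))
    (B := fun i j => arcBody (D.curve (f i) (f j)))
    (fun i j hij => (hD.arc _ (hf i) _ (hf j) (f.toHom.map_adj hij)).joinedIn_arcBody)
    (fun i j k l hij hkl hd => ?_) fun i hi j hj hij => ?_
  · simp only [List.nodup_cons, List.mem_cons, not_or] at hd
    exact hD.disjoint_arcBody (hf i) (hf j) (hf k) (hf l) (f.toHom.map_adj hij)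
      (f.toHom.map_adj hkl) (f.injective.ne hd.1.2.1) (f.injective.ne hd.1.2.2.1)
      (f.injective.ne hd.2.1.1) (f.injective.ne hd.2.1.2.1)
  · refine arcBody_subset_drawingImage (mem_image_of_mem f hi) (mem_image_of_mem f hj)
      (f.toHom.map_adj (SimpleGraph.deleteEdges_adj.2 ⟨hij, fun he => hi ?_⟩))
    rcases Sym2.eq_iff.1 he with ⟨rfl, -⟩ | ⟨rfl, -⟩ <;> simp

end PlanarDrawings

section SupportingEmbeddings

variable {n ω : ℕ} {G : SimpleGraph (Fin n)} {S T : Set (Fin n)} {D D' D'' : RawDrawing n}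
  {Q Q' Q'' : Set Pt}

namespace SameMarkedEmbedding

theorem symm (h : SameMarkedEmbedding n G S D D' Q Q') : SameMarkedEmbedding n G S D' D Q' Q := by
  obtain ⟨φ, hpos, harc, hQ⟩ := h
  refine ⟨φ.symm, fun v hv => ?_, fun u hu v hv huv => ?_, ?_⟩
  · rw [← hpos v hv, φ.symm_apply_apply]
  · rw [← harc u hu v hv huv, ← image_comp, φ.symm_comp_self, image_id]
  · rw [← hQ, ← image_comp, φ.symm_comp_self, image_id]

theorem trans (h : SameMarkedEmbedding n G S D D' Q Q')
    (h' : SameMarkedEmbedding n G S D' D'' Q' Q'') : SameMarkedEmbedding n G S D D'' Q Q'' := by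
  obtain ⟨φ, hpos, harc, hQ⟩ := h
  obtain ⟨ψ, hpos', harc', hQ'⟩ := h'
  refine ⟨φ.trans ψ, fun v hv => ?_, fun u hu v hv huv => ?_, ?_⟩
  · rw [φ.trans_apply, hpos v hv, hpos' v hv]
  · exact (image_comp ψ φ _).trans (by rw [harc u hu v hv huv, harc' u hu v hv huv])
  · exact (image_comp ψ φ _).trans (by rw [hQ, hQ'])

theorem mark_vertex (h : SameMarkedEmbedding n G S D D' Q Q') (hTS : T ⊆ S) {v : Fin n}
    (hv : v ∈ S) : SameMarkedEmbedding n G T D D' {D.pos v} {D'.pos v} := by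
  obtain ⟨φ, hpos, harc, -⟩ := h
  exact ⟨φ, fun u hu => hpos u (hTS hu), fun u hu w hw => harc u (hTS hu) w (hTS hw), by
    rw [image_singleton, hpos v hv]⟩

end SameMarkedEmbedding

theorem image_drawingImage {φ : Pt → Pt} (hpos : ∀ v ∈ S, φ (D.pos v) = D'.pos v)
    (harc : ∀ u ∈ S, ∀ v ∈ S, G.Adj u v →
      φ '' arcBody (D.curve u v) = arcBody (D'.curve u v)) :
    φ '' drawingImage n G S D = drawingImage n G S D' := by
  simp only [drawingImage, image_union, image_iUnion, image_image]
  congr 1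
  · exact image_congr hpos
  · exact iUnion_congr fun u => iUnion_congr fun v => iUnion_congr fun hu =>
      iUnion_congr fun hv => iUnion_congr fun huv => harc u hu v hv huv

variable {a b : Fin n}

theorem window_eq_Ico (hab : a.val + ω = b.val) : window n ω b.val = Ico a b := by
  ext v
  simp only [window, mem_ofPred_eq, mem_Ico, Fin.le_def, Fin.lt_def]
  omega

theorem window_succ_eq_Ioc (hab : a.val + ω = b.val) : window n ω (b.val + 1) = Ioc a b := by
  ext v
  simp only [window, mem_ofPred_eq, mem_Ioc, Fin.le_def, Fin.lt_def]
  omega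

-- The window at time `b` already occupies all `ω` points, and only the point of `a` is vacated.
theorem Realization.pos_entering {P : Finset Pt} (R : Realization n ω G ↑P) (hP : P.card = ω)
    (hab : a.val + ω = b.val) (hlt : a < b) :
    (R.Γ (b.val + 1)).pos b = (R.Γ b.val).pos a := by
  have hb : 1 ≤ b.val := (Nat.zero_le _).trans_lt hlt
  have planar := R.planar b.val hb b.isLt.le
  have planar' := R.planar (b.val + 1) (Nat.le_add_left 1 _) b.isLt
  have same := R.pos_eq (b.val + 1) (Nat.succ_le_succ hb) b.isLt
  rw [window_eq_Ico hab] at planar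
  rw [window_succ_eq_Ioc hab] at planar'
  rw [Nat.add_sub_cancel, window_eq_Ico hab, window_succ_eq_Ioc hab] at same
  have surj : SurjOn (R.Γ b.val).pos ↑(Finset.Ico a b) ↑P :=
    Finset.surjOn_of_injOn_of_card_le _ (fun v hv => planar.pos_mem v (by simpa using hv))
      (by simpa using planar.pos_inj) (by rw [Fin.card_Ico, hP]; omega)
  obtain ⟨v, hv, hvb⟩ := surj (planar'.pos_mem b (right_mem_Ioc.2 hlt))
  rw [Finset.coe_Ico, mem_Ico] at hv
  rcases hv.1.eq_or_lt with rfl | hav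
  · exact hvb.symm
  · rw [← same v ⟨hv, hav, hv.2.le⟩] at hvb
    exact absurd (planar'.pos_inj ⟨hav, hv.2.le⟩ (right_mem_Ioc.2 hlt) hvb) hv.2.ne

theorem Realization.sameMarkedEmbedding {P : Finset Pt} (R : Realization n ω G ↑P)
    (hP : P.card = ω) (hab : a.val + ω = b.val) (hlt : a < b) :
    SameMarkedEmbedding n G (Ioo a b) (R.Γ b.val) (R.Γ (b.val + 1))
      {(R.Γ b.val).pos a} {(R.Γ (b.val + 1)).pos b} := by
  have hb : 1 ≤ b.val := (Nat.zero_le _).trans_lt hlt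
  have same := R.pos_eq (b.val + 1) (Nat.succ_le_succ hb) b.isLt
  have same' := R.curve_eq (b.val + 1) (Nat.succ_le_succ hb) b.isLt
  have common : Ioo a b ⊆ window n ω (b.val + 1 - 1) ∩ window n ω (b.val + 1) := by
    rw [Nat.add_sub_cancel, window_eq_Ico hab, window_succ_eq_Ioc hab]
    exact subset_inter Ioo_subset_Ico_self Ioo_subset_Ioc_self
  refine ⟨Homeomorph.refl Pt, fun v hv => (same v (common hv)).symm, fun u hu v hv huv => ?_, ?_⟩
  · exact (image_id _).trans (by rw [same' u (common hu) v (common hv) huv, Nat.add_sub_cancel])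
  · exact (image_id _).trans (by rw [R.pos_entering hP hab hlt])

theorem IsSupportingDrawing.sameMarkedEmbedding {Δ : RawDrawing n}
    (hΔ : IsSupportingDrawing n ω G Δ) (hab : a.val + ω = b.val) (hlt : a < b) :
    SameMarkedEmbedding n G (Ioo a b) Δ Δ {Δ.pos a} {Δ.pos b} := by
  obtain ⟨-, P, hP, R, hR⟩ := hΔ
  have hb : 1 ≤ b.val := (Nat.zero_le _).trans_lt hlt
  have leaving := hR b.val hb b.isLt.le
  have entering := hR (b.val + 1) (Nat.le_add_left 1 _) b.isLt
  rw [window_eq_Ico hab] at leaving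
  rw [window_succ_eq_Ioc hab] at entering
  exact ((leaving.mark_vertex Ioo_subset_Ico_self (left_mem_Ico.2 hlt)).trans
    (R.sameMarkedEmbedding hP hab hlt)).trans
    (entering.mark_vertex Ioo_subset_Ioc_self (right_mem_Ioc.2 hlt)).symm

theorem not_isSupportingDrawing {Δ : RawDrawing n} (f : SimpleGraph.Copy K5DeleteEdge G)
    (hω : (f 3).val + ω = (f 4).val) (hf : f '' {3, 4}ᶜ ⊆ Ioo (f 3) (f 4)) {z : Fin n}
    (hz : z ∈ Ioo (f 3) (f 4) \ f '' {3, 4}ᶜ) (hadj : G.Adj (f 3) z) :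
    ¬ IsSupportingDrawing n ω G Δ := by
  intro hΔ
  have planar := hΔ.1
  obtain ⟨ψ, hpos, harc, hψ⟩ := hΔ.sameMarkedEmbedding hω (hz.1.1.trans hz.1.2)
  rw [image_singleton, singleton_eq_singleton_iff] at hψ
  have hψT : ψ '' drawingImage n G (f '' {3, 4}ᶜ) Δ = drawingImage n G (f '' {3, 4}ᶜ) Δ :=
    image_drawingImage (fun v hv => hpos v (hf hv))
      fun u hu v hv => harc u (hf hu) v (hf hv)
  have joined : JoinedIn (drawingImage n G (f '' {3, 4}ᶜ) Δ)ᶜ (Δ.pos (f 3)) (Δ.pos z) :=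
    planar.joinedIn_compl_drawingImage (subset_univ _)
      ⟨mem_univ _, fun h => (hf h).1.false⟩ ⟨mem_univ _, hz.2⟩ hadj
  have joined' : JoinedIn (drawingImage n G (f '' {3, 4}ᶜ) Δ)ᶜ (Δ.pos (f 4)) (Δ.pos z) := by
    have := joined.map ψ.continuous
    rwa [image_compl_eq ψ.bijective, hψT, hψ, hpos z hz.1] at this
  exact planar.not_joinedIn_compl_triangle f (fun _ => mem_univ _) (joined.trans joined'.symm)

end SupportingEmbeddings

section StraightLineDrawings

/-- Twice the signed area of the triangle `abc`; it vanishes iff the three points are collinear. -/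
def orient {R : Type*} [CommRing R] (a b c : R × R) : R :=
  (b.1 - a.1) * (c.2 - a.2) - (b.2 - a.2) * (c.1 - a.1)

theorem orient_map {R R' : Type*} [CommRing R] [CommRing R'] (f : R →+* R') (a b c : R × R) :
    orient (Prod.map f f a) (Prod.map f f b) (Prod.map f f c) = f (orient a b c) := by
  simp only [orient, Prod.map_fst, Prod.map_snd, map_sub, map_mul]

theorem orient_lineMap (a b c d : Pt) (t : ℝ) :
    orient a b (AffineMap.lineMap c d t) = (1 - t) * orient a b c + t * orient a b d := by
  simp only [orient, AffineMap.lineMap_apply_module, Prod.fst_add, Prod.snd_add, Prod.smul_fst,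
    Prod.smul_snd, smul_eq_mul]
  ring

theorem orient_left {R : Type*} [CommRing R] (a b : R × R) : orient a b a = 0 := by
  simp only [orient, sub_self, mul_zero]

theorem orient_right {R : Type*} [CommRing R] (a b : R × R) : orient a b b = 0 := by
  simp only [orient]
  ring

theorem convex_combination_ne_zero {r s t : ℝ} (hrs : 0 ≤ r * s) (hne : r ≠ 0 ∨ s ≠ 0)
    (ht : t ∈ Ioo (0 : ℝ) 1) : (1 - t) * r + t * s ≠ 0 := by
  have ht₀ : 0 < t := ht.1
  have ht₁ : 0 < 1 - t := sub_pos.2 ht.2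
  intro h
  rcases hne with hr | hs
  · have hpos : 0 < (1 - t) * r ^ 2 + t * (r * s) := by positivity
    exact hpos.ne' (by linear_combination r * h)
  · have hpos : 0 < (1 - t) * (r * s) + t * s ^ 2 := by positivity
    exact hpos.ne' (by linear_combination s * h)

variable {n ω : ℕ} {G : SimpleGraph (Fin n)} {S : Set (Fin n)} {P : Set Pt} {q : Fin n → Pt}

/-- The drawing with vertices at the points `q` and all edges drawn as straight segments. -/
noncomputable def straightDrawing (q : Fin n → Pt) : RawDrawing n where
  pos := q
  curve u v := AffineMap.lineMap (q u) (q v)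

/-- The straight-line drawing of `G[S]` with vertices at `q` is planar: vertices have distinct
positions, no vertex is collinear with an edge, and of two distinct edges one lies on one side of
the line through the other. Edges may share an endpoint, so sides are compared weakly. The
coordinates range over a ring `R` so that the condition can be decided for integers. -/
def IsStraightPlanar {R : Type*} [CommRing R] [LinearOrder R] (G : SimpleGraph (Fin n))
    (S : Set (Fin n)) (q : Fin n → R × R) : Prop :=
  (∀ u ∈ S, ∀ v ∈ S, q u = q v → u = v) ∧
    ∀ u ∈ S, ∀ v ∈ S, G.Adj u v →
      (∀ w ∈ S, w ≠ u → w ≠ v → orient (q u) (q v) (q w) ≠ 0) ∧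
      ∀ x ∈ S, ∀ y ∈ S, G.Adj x y → s(u, v) ≠ s(x, y) →
        0 ≤ orient (q u) (q v) (q x) * orient (q u) (q v) (q y) ∨
          0 ≤ orient (q x) (q y) (q u) * orient (q x) (q y) (q v)

set_option synthInstance.maxSize 256 in
instance {R : Type*} [CommRing R] [LinearOrder R] [DecidableRel G.Adj] [DecidablePred (· ∈ S)]
    (q : Fin n → R × R) : Decidable (IsStraightPlanar G S q) := by
  unfold IsStraightPlanar
  infer_instance

instance (i : ℕ) : DecidablePred (· ∈ window n ω i) := fun j =>
  inferInstanceAs (Decidable (j.val + 1 ≤ i ∧ i ≤ j.val + ω))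

theorem IsStraightPlanar.intCast {z : Fin n → ℤ × ℤ} (h : IsStraightPlanar G S z) :
    IsStraightPlanar G S fun v => (Prod.map (↑) (↑) (z v) : Pt) := by
  have cast_orient : ∀ a b c : ℤ × ℤ,
      orient (Prod.map (↑) (↑) a : Pt) (Prod.map (↑) (↑) b) (Prod.map (↑) (↑) c) =
        ((orient a b c : ℤ) : ℝ) := orient_map (Int.castRingHom ℝ)
  simp only [IsStraightPlanar, cast_orient, Int.cast_ne_zero, ← Int.cast_mul, Int.cast_nonneg_iff]
  exact ⟨fun u hu v hv huv => h.1 u hu v hv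
    (Int.cast_injective.prodMap Int.cast_injective huv), h.2⟩

theorem orient_eq_zero_of_mem_arcInterior {u v : Fin n} {p : Pt}
    (hp : p ∈ arcInterior ((straightDrawing q).curve u v)) : orient (q u) (q v) p = 0 := by
  obtain ⟨t, -, rfl⟩ := hp
  simp only [straightDrawing, orient_lineMap, orient_left, orient_right, mul_zero, add_zero]

theorem orient_ne_zero_of_mem_arcInterior {a b p : Pt} {x y : Fin n}
    (hxy : 0 ≤ orient a b (q x) * orient a b (q y))
    (hne : orient a b (q x) ≠ 0 ∨ orient a b (q y) ≠ 0)
    (hp : p ∈ arcInterior ((straightDrawing q).curve x y)) : orient a b p ≠ 0 := by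
  obtain ⟨t, ht, rfl⟩ := hp
  simpa only [straightDrawing, orient_lineMap] using convex_combination_ne_zero hxy hne ht

namespace IsStraightPlanar

variable {u v x y : Fin n}

theorem orient_ne_zero_or (h : IsStraightPlanar G S q) (hu : u ∈ S) (hv : v ∈ S) (hx : x ∈ S)
    (hy : y ∈ S) (huv : G.Adj u v) (hxy : G.Adj x y) (hne : s(u, v) ≠ s(x, y)) :
    orient (q u) (q v) (q x) ≠ 0 ∨ orient (q u) (q v) (q y) ≠ 0 := by
  by_cases hxuv : x = u ∨ x = v
  · refine Or.inr ((h.2 u hu v hv huv).1 y hy ?_ ?_) <;> rintro rfl <;>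
      rcases hxuv with rfl | rfl <;> simp_all
  · rw [not_or] at hxuv
    exact Or.inl ((h.2 u hu v hv huv).1 x hx hxuv.1 hxuv.2)

theorem disjoint_arcInterior (h : IsStraightPlanar G S q) (hu : u ∈ S) (hv : v ∈ S) (hx : x ∈ S)
    (hy : y ∈ S) (huv : G.Adj u v) (hxy : G.Adj x y) (hne : s(u, v) ≠ s(x, y)) :
    Disjoint (arcInterior ((straightDrawing q).curve u v))
      (arcInterior ((straightDrawing q).curve x y)) := by
  refine disjoint_left.2 fun p hp hp' => ?_
  rcases (h.2 u hu v hv huv).2 x hx y hy hxy hne with hside | hside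
  · exact orient_ne_zero_of_mem_arcInterior hside
      (h.orient_ne_zero_or hu hv hx hy huv hxy hne) hp' (orient_eq_zero_of_mem_arcInterior hp)
  · exact orient_ne_zero_of_mem_arcInterior hside
      (h.orient_ne_zero_or hx hy hu hv hxy huv hne.symm) hp (orient_eq_zero_of_mem_arcInterior hp')

theorem isPlanarDrawingOn (h : IsStraightPlanar G S q) (hP : MapsTo q S P) :
    IsPlanarDrawingOn n G S P (straightDrawing q) where
  pos_mem := hP
  pos_inj := fun u hu v hv huv => h.1 u hu v hv huv
  curve_symm u v := funext fun t => (AffineMap.lineMap_apply_one_sub (q u) (q v) t).symm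
  arc u hu v hv huv := ⟨AffineMap.lineMap_continuous.continuousOn,
    (AffineMap.lineMap_injective ℝ fun e => huv.ne (h.1 u hu v hv e)).injOn,
    AffineMap.lineMap_apply_zero _ _, AffineMap.lineMap_apply_one _ _⟩
  vertex_off_arc u hu v hv huv w hw hmem := by
    have hne : q u ≠ q v := fun e => huv.ne (h.1 u hu v hv e)
    by_cases hwuv : w = u ∨ w = v
    · obtain ⟨t, ht, e⟩ := hmem
      rcases hwuv with rfl | rfl
      · exact ht.1.ne' ((AffineMap.lineMap_eq_left_iff.1 e).resolve_left hne)
      · exact ht.2.ne ((AffineMap.lineMap_eq_right_iff.1 e).resolve_left hne)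
    · rw [not_or] at hwuv
      exact (h.2 u hu v hv huv).1 w hw hwuv.1 hwuv.2 (orient_eq_zero_of_mem_arcInterior hmem)
  no_cross u hu v hv x hx y hy huv hxy hne := disjoint_iff_inter_eq_empty.1 <|
    h.disjoint_arcInterior hu hv hx hy huv hxy hne

theorem planarGraph (h : IsStraightPlanar G univ q) : PlanarGraph n G :=
  ⟨straightDrawing q, h.isPlanarDrawingOn (mapsTo_univ q univ)⟩

end IsStraightPlanar

theorem realizable_of_isStraightPlanar {k : ℕ} (hq : (Finset.univ.image q).card = ω + k)
    (h : ∀ i, 1 ≤ i → i ≤ n → IsStraightPlanar G (window n ω i) q) : Realizable n ω k G := by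
  refine ⟨Finset.univ.image q, hq, ⟨fun _ => straightDrawing q, fun i hi hin => ?_,
    fun _ _ _ _ _ => rfl, fun _ _ _ _ _ _ _ _ => rfl⟩⟩
  exact (h i hi hin).isPlanarDrawingOn fun v _ =>
    Finset.mem_coe.2 (Finset.mem_image_of_mem q (Finset.mem_univ v))

end StraightLineDrawings

section Connectivity

-- Outside `s`, descending along lower-ranked neighbours ends in the clique, which `s` cannot cover.
theorem induce_notMem_connected_of_rank {V : Type*} {G : SimpleGraph V} {K s : Finset V} {k : ℕ}
    (hK : G.IsClique K) (hKcard : k ≤ K.card) (rank : V → ℕ)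
    (hrank : ∀ v ∉ K, ∃ N : Finset V, k ≤ N.card ∧ ∀ u ∈ N, G.Adj v u ∧ rank u < rank v)
    (hs : s.card < k) : (G.induce {v | v ∉ s}).Connected := by
  obtain ⟨r, hr, hrs⟩ := Finset.exists_mem_notMem_of_card_lt_card (hs.trans_le hKcard)
  refine (SimpleGraph.connected_iff_exists_forall_reachable _).2 ⟨⟨r, hrs⟩, fun ⟨v, hv⟩ => ?_⟩
  induction h : rank v using Nat.strong_induction_on generalizing v with
  | _ m ih =>
    subst h
    by_cases hvK : v ∈ K
    · rcases eq_or_ne r v with rfl | hrv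
      · rfl
      · exact SimpleGraph.Adj.reachable (SimpleGraph.induce_adj.2 (hK hr hvK hrv))
    · obtain ⟨N, hN, hadj⟩ := hrank v hvK
      obtain ⟨u, hu, hus⟩ := Finset.exists_mem_notMem_of_card_lt_card (hs.trans_le hN)
      have hvu : (G.induce {v | v ∉ s}).Adj ⟨u, hus⟩ ⟨v, hv⟩ :=
        SimpleGraph.induce_adj.2 (hadj u hu).1.symm
      exact (ih (rank u) (hadj u hu).2 u hus rfl).trans hvu.reachable

end Connectivity

section StackedTriangulation

/-- The corners of the face into which each vertex is placed when the triangulation of the theorem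
is stacked up from the triangle on `{2, 3, 4}`. The vertices `3` and `4` of that triangle list its
edges instead. -/
def stackCorners : Fin 10 → Finset (Fin 10) :=
  ![{2, 3, 4}, {0, 3, 4}, ∅, {2}, {2, 3}, {0, 2, 4}, {0, 2, 3}, {0, 2, 5}, {2, 3, 4}, {3, 4, 8}]

/-- The graph of the theorem, in which every vertex is joined to the corners listed for it. In any
plane drawing the triangle on `{2, 3, 4}` separates `0` from `8`. -/
abbrev stackedTriangulation : SimpleGraph (Fin 10) :=
  SimpleGraph.fromRel fun u v => v ∈ stackCorners u

/-- Positions for a straight-line drawing of the whole graph. -/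
def planarCoords : Fin 10 → ℤ × ℤ :=
  ![(0, -21), (20, -27), (-60, 0), (60, 0), (1, -60), (-20, -29), (3, -7), (-27, -17), (2, -200),
    (21, -87)]

/-- Positions for straight-line drawings of all windows: vertices `8` and `9` take over the points
of `0` and `1`, which have left by then. -/
def storyCoords : Fin 10 → ℤ × ℤ :=
  ![(0, -21), (20, -27), (-60, 0), (60, 0), (1, -60), (-20, -29), (3, -7), (-27, -17), (0, -21),
    (20, -27)]

theorem stackedTriangulation_visible : Visible 10 8 stackedTriangulation := by
  unfold Visible
  decide

theorem stackedTriangulation_threeConnected : ThreeConnected 10 stackedTriangulation := by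
  refine ⟨by norm_num, fun s hs => ?_⟩
  refine induce_notMem_connected_of_rank (K := {2, 3, 4}) (k := 3) (by decide) (by decide)
    ![1, 2, 0, 0, 0, 2, 2, 3, 1, 2] (fun v hv => ⟨stackCorners v, ?_⟩) (Nat.lt_succ_of_le hs)
  revert v
  decide

theorem stackedTriangulation_planarGraph : PlanarGraph 10 stackedTriangulation :=
  (show IsStraightPlanar stackedTriangulation univ planarCoords by
    decide +kernel).intCast.planarGraph

theorem stackedTriangulation_realizable : Realizable 10 8 0 stackedTriangulation := by
  have windows : ∀ i ∈ Finset.Icc 1 10,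
      IsStraightPlanar stackedTriangulation (window 10 8 i) storyCoords := by
    decide +kernel
  refine realizable_of_isStraightPlanar ?_ fun i hi hin =>
    (windows i (Finset.mem_Icc.2 ⟨hi, hin⟩)).intCast
  have cast_injective : Function.Injective (Prod.map (↑) (↑) : ℤ × ℤ → Pt) :=
    Int.cast_injective.prodMap Int.cast_injective
  rw [← Function.comp_def, ← Finset.image_image, Finset.card_image_of_injective _ cast_injective]
  decide

/-- The triangle on `{2, 3, 4}` together with the leaving vertex `0` and the entering vertex `8`. -/
def leavingEnteringCopy : SimpleGraph.Copy K5DeleteEdge stackedTriangulation where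
  toHom := ⟨![2, 3, 4, 0, 8], by decide⟩
  injective' := by decide

theorem not_isSupportingDrawing_stackedTriangulation (Δ : RawDrawing 10) :
    ¬ IsSupportingDrawing 10 8 stackedTriangulation Δ := by
  refine not_isSupportingDrawing leavingEnteringCopy rfl (z := 1) ?_ ?_ (by decide)
  · rintro _ ⟨i, hi, rfl⟩
    revert i
    decide
  · refine ⟨by decide, ?_⟩
    rintro ⟨i, hi, h⟩
    revert i
    decide

end StackedTriangulation

/-- **Lemma 2.** There exists a minimal graph story
`S = (G, ω, τ)` such that (i) `G` is planar, (ii) `S` is realizable, and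
(iii) `S` does not admit a supporting embedding.  This holds in particular for
a triconnected planar graph on `10` vertices with `ω = 8`. -/
theorem exists_realizable_story_without_supporting_embedding :
    ∃ G : SimpleGraph (Fin 10),
      Visible 10 8 G ∧
      ThreeConnected 10 G ∧
      PlanarGraph 10 G ∧
      Realizable 10 8 0 G ∧
      ¬ ∃ Δ : RawDrawing 10, IsSupportingDrawing 10 8 G Δ := by
  refine ⟨stackedTriangulation, stackedTriangulation_visible, stackedTriangulation_threeConnected,
    stackedTriangulation_planarGraph, stackedTriangulation_realizable, ?_⟩
  rintro ⟨Δ, hΔ⟩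
  exact not_isSupportingDrawing_stackedTriangulation Δ hΔ

end GraphStories
end

section
/- Every minimal graph story S = (G, ω, τ) in which G is an outerplanar graph is realizable. Moreover, any outerplanar embedding of G is a supporting embedding for S: for any outerplanar embedding φ of G, the restrictions φ_i of φ to the graphs G_i form a sequence of pairwise compatible embeddings, since consecutive restrictions to G_{i−1} ∩ G_i determine the same set of faces and both v_i and v_{i−ω} lie in the region corresponding to the external face. -/
open Set

namespace GraphStories

/-- The external (unbounded) region determined by a compact plane set `X`:
the points outside `X` whose connected component in the complement of `X` is
unbounded. -/
def unboundedRegion (X : Set Pt) : Set Pt :=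
  {p | p ∉ X ∧ ¬ Bornology.IsBounded (connectedComponentIn Xᶜ p)}

/-- `D` is an outerplanar drawing/embedding of `G`: a planar drawing of `G` in
which every vertex is incident to the external face. -/
def IsOuterplanarDrawing (n : ℕ) (G : SimpleGraph (Fin n)) (D : RawDrawing n) : Prop :=
  IsPlanarDrawing n G univ D ∧
  ∀ v : Fin n, D.pos v ∈ closure (unboundedRegion (drawingImage n G univ D))

/-- `G` is outerplanar. -/
def Outerplanar (n : ℕ) (G : SimpleGraph (Fin n)) : Prop :=
  ∃ D : RawDrawing n, IsOuterplanarDrawing n G D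

/-!
Since every vertex of an outerplanar drawing touches the external face, deleting vertices from the
drawing leaves the deleted ones inside the external face of what remains. The external face is a
connected open set, so a homeomorphism of the plane that is the identity on the drawing of
`G_{i-1} ∩ G_i` can carry the point of the entering vertex `v_i` to the point of the leaving vertex
`v_{i-ω}`. Composing these homeomorphisms over time and applying them to one fixed drawing of `G`
gives all the `Γ_i`, and every vertex ends up at a point of one of the first `ω` vertices.
-/

section Homogeneity

variable {E : Type*} [NormedAddCommGroup E] [NormedSpace ℝ E]

theorem isPreconnected_compl_closedBall_of_one_lt_rank (hE : 1 < Module.rank ℝ E) (c : E) (r : ℝ) :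
    IsPreconnected (Metric.closedBall c r)ᶜ := by
  obtain hr | hr := lt_or_ge r 0
  · simpa [Metric.closedBall_eq_empty.2 hr] using isPreconnected_univ
  have polar : (Metric.closedBall c r)ᶜ =
      (fun p : E × ℝ ↦ c + p.2 • p.1) '' Metric.sphere 0 1 ×ˢ Ioi r := by
    ext z
    simp only [mem_compl_iff, Metric.mem_closedBall, not_le, mem_image, mem_prod,
      mem_sphere_zero_iff_norm, mem_Ioi, Prod.exists, dist_eq_norm]
    constructor
    · intro hz
      have hz₀ : ‖z - c‖ ≠ 0 := (hr.trans_lt hz).ne'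
      exact ⟨‖z - c‖⁻¹ • (z - c), ‖z - c‖, ⟨by simp [norm_smul, hz₀], hz⟩, by simp [hz₀]⟩
    · rintro ⟨u, t, ⟨hu, ht⟩, rfl⟩
      simpa [norm_smul, hu] using ht.trans_le (le_abs_self t)
  rw [polar]
  exact ((isPreconnected_sphere hE 0 1).prod isPreconnected_Ioi).image _ (by fun_prop)

theorem connectedComponentIn_compl_eq_of_not_isBounded (hE : 1 < Module.rank ℝ E) {X : Set E}
    (hX : Bornology.IsBounded X) {a b : E}
    (ha : ¬ Bornology.IsBounded (connectedComponentIn Xᶜ a))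
    (hb : ¬ Bornology.IsBounded (connectedComponentIn Xᶜ b)) :
    connectedComponentIn Xᶜ a = connectedComponentIn Xᶜ b := by
  obtain ⟨r, hr⟩ := hX.subset_closedBall 0
  have escape {s : Set E} (hs : ¬ Bornology.IsBounded s) : ∃ p ∈ s, p ∉ Metric.closedBall 0 r :=
    not_subset.1 fun h ↦ hs (Metric.isBounded_closedBall.subset h)
  obtain ⟨a', ha', har⟩ := escape ha
  obtain ⟨b', hb', hbr⟩ := escape hb
  have hab : b' ∈ connectedComponentIn Xᶜ a' :=
    (isPreconnected_compl_closedBall_of_one_lt_rank hE 0 r).subset_connectedComponentIn har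
      (compl_subset_compl.2 hr) hbr
  rw [connectedComponentIn_eq ha', connectedComponentIn_eq hab, connectedComponentIn_eq hb']

variable [CompleteSpace E]

theorem exists_homeomorph_eq_add_of_lipschitzWith {g : E → E} {K : NNReal} (hg : LipschitzWith K g)
    (hK : K < 1) : ∃ h : E ≃ₜ E, ∀ x, h x = x + g x := by
  have approx : ApproximatesLinearOn (fun x ↦ x + g x)
      (ContinuousLinearEquiv.refl ℝ E : E →L[ℝ] E) univ K := by
    rw [ApproximatesLinearOn.approximatesLinearOn_iff_lipschitzOnWith]
    convert hg.lipschitzOnWith using 1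
    ext x
    simp
  refine ⟨approx.toHomeomorph _ ?_, fun _ ↦ rfl⟩
  obtain h | _ := subsingleton_or_nontrivial E
  · exact .inl h
  · right
    simpa using hK

theorem exists_homeomorph_eqOn_compl_ball {c p : E} {r : ℝ} (hp : p ∈ Metric.ball c r) :
    ∃ h : E ≃ₜ E, h c = p ∧ EqOn h id (Metric.ball c r)ᶜ := by
  have hr : 0 < r := Metric.pos_of_mem_ball hp
  -- Points are displaced along `p - c`, by an amount decreasing linearly to `0` at radius `r`.
  have tent : LipschitzWith 1 fun z ↦ max (r - dist z c) 0 := by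
    simpa using ((LipschitzWith.const r).sub (LipschitzWith.dist_left c)).max_const 0
  have hK : ‖r⁻¹ • (p - c)‖₊ < 1 := by
    rw [← NNReal.coe_lt_coe, coe_nnnorm, norm_smul, norm_inv, Real.norm_of_nonneg hr.le,
      NNReal.coe_one, inv_mul_lt_one₀ hr, ← dist_eq_norm]
    exact hp
  obtain ⟨h, hh⟩ := exists_homeomorph_eq_add_of_lipschitzWith
    (g := fun z ↦ max (r - dist z c) 0 • r⁻¹ • (p - c))
    (by simpa [Function.comp_def] using
      (ContinuousLinearMap.toSpanSingleton ℝ (r⁻¹ • (p - c))).lipschitz.comp tent) hK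
  refine ⟨h, by simp [hh, hr.le, hr.ne'], fun z hz ↦ ?_⟩
  have : r ≤ dist z c := by simpa using hz
  simp [hh, this]

theorem exists_homeomorph_eqOn_compl_of_isPreconnected {U : Set E} (hU : IsOpen U)
    (hU' : IsPreconnected U) {x y : E} (hx : x ∈ U) (hy : y ∈ U) :
    ∃ h : E ≃ₜ E, h x = y ∧ EqOn h id Uᶜ := by
  refine hU'.induction₂ (fun x y ↦ ∃ h : E ≃ₜ E, h x = y ∧ EqOn h id Uᶜ) ?_ ?_ ?_ hx hy
  · intro x hx
    obtain ⟨r, hr, hrU⟩ := Metric.isOpen_iff.1 hU x hx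
    filter_upwards [mem_nhdsWithin_of_mem_nhds (Metric.ball_mem_nhds x hr)] with y hy
    obtain ⟨h, hxy, hfix⟩ := exists_homeomorph_eqOn_compl_ball hy
    exact ⟨h, hxy, hfix.mono (compl_subset_compl.2 hrU)⟩
  · rintro x y z - - - ⟨h, rfl, hfix⟩ ⟨k, rfl, kfix⟩
    exact ⟨h.trans k, rfl, fun w hw ↦ by simp [hfix hw, kfix hw]⟩
  · rintro x y - - ⟨h, rfl, hfix⟩
    exact ⟨h.symm, by simp, fun w hw ↦ h.symm_apply_eq.2 (hfix hw).symm⟩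

theorem exists_homeomorph_eqOn_of_mem_connectedComponentIn {X : Set E} (hX : IsClosed X) {p q : E}
    (hq : q ∈ connectedComponentIn Xᶜ p) : ∃ h : E ≃ₜ E, h p = q ∧ EqOn h id X := by
  have hp : p ∈ Xᶜ := connectedComponentIn_nonempty_iff.1 ⟨q, hq⟩
  obtain ⟨h, hpq, hfix⟩ := exists_homeomorph_eqOn_compl_of_isPreconnected
    hX.isOpen_compl.connectedComponentIn isPreconnected_connectedComponentIn
    (mem_connectedComponentIn hp) hq
  exact ⟨h, hpq, hfix.mono (subset_compl_comm.1 (connectedComponentIn_subset _ _))⟩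

end Homogeneity

section UnboundedRegion

variable {X Y : Set Pt} {p q : Pt}

theorem mem_connectedComponentIn_of_mem_unboundedRegion (hX : Bornology.IsBounded X)
    (hp : p ∈ unboundedRegion X) (hq : q ∈ unboundedRegion X) :
    q ∈ connectedComponentIn Xᶜ p := by
  have hrank : 1 < Module.rank ℝ Pt := Module.one_lt_rank_of_one_lt_finrank (by simp)
  rw [connectedComponentIn_compl_eq_of_not_isBounded hrank hX hp.2 hq.2]
  exact mem_connectedComponentIn hq.1

theorem mem_unboundedRegion_of_mem_closure (hX : IsClosed X) (hXY : X ⊆ Y)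
    (hp : p ∈ closure (unboundedRegion Y)) (hpX : p ∉ X) : p ∈ unboundedRegion X := by
  refine ⟨hpX, fun hbdd ↦ ?_⟩
  have face_nhds : connectedComponentIn Xᶜ p ∈ nhds p :=
    hX.isOpen_compl.connectedComponentIn.mem_nhds (mem_connectedComponentIn hpX)
  obtain ⟨q, hqp, hqY⟩ := mem_closure_iff_nhds.1 hp _ face_nhds
  rw [connectedComponentIn_eq hqp] at hbdd
  exact hqY.2 (hbdd.subset (connectedComponentIn_mono q (compl_subset_compl.2 hXY)))

end UnboundedRegion

variable {n ω : ℕ} {G : SimpleGraph (Fin n)} {S T : Set (Fin n)} {P Q : Set Pt} {D : RawDrawing n}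

section DrawingImage

theorem mem_drawingImage {p : Pt} :
    p ∈ drawingImage n G S D ↔ (∃ v ∈ S, D.pos v = p) ∨
      ∃ u ∈ S, ∃ v ∈ S, G.Adj u v ∧ p ∈ arcBody (D.curve u v) := by
  simp only [drawingImage, mem_union, mem_image, mem_iUnion, exists_prop]
  grind

theorem drawingImage_mono (hST : S ⊆ T) : drawingImage n G S D ⊆ drawingImage n G T D := by
  intro p
  simp only [mem_drawingImage]
  grind

theorem IsArcFrom.arcBody_eq_union {γ : ℝ → Pt} {a b : Pt} (hγ : IsArcFrom γ a b) :
    arcBody γ = arcInterior γ ∪ {a, b} := by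
  rw [arcBody, arcInterior, ← Ioo_union_both zero_le_one, image_union, image_pair, hγ.2.2.1,
    hγ.2.2.2]

namespace IsPlanarDrawingOn

theorem mono (hD : IsPlanarDrawingOn n G T P D) (hST : S ⊆ T) :
    IsPlanarDrawingOn n G S P D where
  pos_mem v hv := hD.pos_mem v (hST hv)
  pos_inj := hD.pos_inj.mono hST
  curve_symm := hD.curve_symm
  arc u hu v hv := hD.arc u (hST hu) v (hST hv)
  vertex_off_arc u hu v hv ha w hw := hD.vertex_off_arc u (hST hu) v (hST hv) ha w (hST hw)
  no_cross u hu v hv x hx y hy :=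
    hD.no_cross u (hST hu) v (hST hv) x (hST hx) y (hST hy)

theorem isCompact_drawingImage (hD : IsPlanarDrawingOn n G S P D) :
    IsCompact (drawingImage n G S D) := by
  refine (S.toFinite.image _).isCompact.union ?_
  exact isCompact_iUnion fun u ↦ isCompact_iUnion fun v ↦ isCompact_iUnion fun hu ↦
    isCompact_iUnion fun hv ↦ isCompact_iUnion fun huv ↦
      isCompact_Icc.image_of_continuousOn (hD.arc u hu v hv huv).1

theorem pos_notMem_drawingImage (hD : IsPlanarDrawingOn n G T P D) (hST : S ⊆ T) {w : Fin n}
    (hwT : w ∈ T) (hwS : w ∉ S) : D.pos w ∉ drawingImage n G S D := by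
  have pos_ne : ∀ v ∈ S, D.pos w ≠ D.pos v := fun v hv h ↦
    hwS (hD.pos_inj hwT (hST hv) h ▸ hv)
  rw [mem_drawingImage]
  rintro (⟨v, hv, hvw⟩ | ⟨u, hu, v, hv, huv, hw⟩)
  · exact pos_ne v hv hvw.symm
  · rw [(hD.arc u (hST hu) v (hST hv) huv).arcBody_eq_union] at hw
    obtain hw | hw | hw := hw
    · exact hD.vertex_off_arc u (hST hu) v (hST hv) huv w hwT hw
    · exact pos_ne u hu hw
    · exact pos_ne v hv hw

end IsPlanarDrawingOn

end DrawingImage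

section Map

/-- The image of a drawing under a homeomorphism of the plane. The parameter of each curve is
clamped to `[0, 1]`: realizations compare curves on all of `ℝ`, whereas a drawing only constrains
them on `[0, 1]`. -/
noncomputable def RawDrawing.map (D : RawDrawing n) (φ : Pt ≃ₜ Pt) : RawDrawing n where
  pos v := φ (D.pos v)
  curve u v t := φ (D.curve u v (projIcc 0 1 zero_le_one t))

theorem RawDrawing.eqOn_map_curve (D : RawDrawing n) (φ : Pt ≃ₜ Pt) (u v : Fin n) :
    EqOn ((D.map φ).curve u v) (φ ∘ D.curve u v) (Icc 0 1) := fun t ht ↦ by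
  simp [RawDrawing.map, projIcc_of_mem zero_le_one ht]

theorem RawDrawing.arcBody_map (D : RawDrawing n) (φ : Pt ≃ₜ Pt) (u v : Fin n) :
    arcBody ((D.map φ).curve u v) = φ '' arcBody (D.curve u v) := by
  rw [arcBody, (D.eqOn_map_curve φ u v).image_eq, image_comp, arcBody]

theorem RawDrawing.arcInterior_map (D : RawDrawing n) (φ : Pt ≃ₜ Pt) (u v : Fin n) :
    arcInterior ((D.map φ).curve u v) = φ '' arcInterior (D.curve u v) := by
  rw [arcInterior, ((D.eqOn_map_curve φ u v).mono Ioo_subset_Icc_self).image_eq, image_comp,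
    arcInterior]

theorem IsPlanarDrawingOn.map (hD : IsPlanarDrawingOn n G S P D) (φ : Pt ≃ₜ Pt)
    (hQ : ∀ v ∈ S, φ (D.pos v) ∈ Q) : IsPlanarDrawingOn n G S Q (D.map φ) where
  pos_mem := hQ
  pos_inj := φ.injective.comp_injOn hD.pos_inj
  curve_symm u v := by
    funext t
    simp only [RawDrawing.map, hD.curve_symm u v, ← unitInterval.coe_symm_eq,
      unitInterval.symm_projIcc]
  arc u hu v hv huv := by
    obtain ⟨hcont, hinj, h₀, h₁⟩ := hD.arc u hu v hv huv
    have heq := D.eqOn_map_curve φ u v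
    refine ⟨(φ.continuous.comp_continuousOn hcont).congr heq,
      (φ.injective.comp_injOn hinj).congr heq.symm, ?_, ?_⟩
    · simp [h₀, RawDrawing.map]
    · simp [h₁, RawDrawing.map]
  vertex_off_arc u hu v hv huv w hw := by
    rw [D.arcInterior_map]
    exact φ.injective.mem_set_image.not.2 (hD.vertex_off_arc u hu v hv huv w hw)
  no_cross u hu v hv x hx y hy huv hxy hne := by
    rw [D.arcInterior_map, D.arcInterior_map, ← image_inter φ.injective,
      hD.no_cross u hu v hv x hx y hy huv hxy hne, image_empty]

theorem sameMarkedEmbedding_map (D : RawDrawing n) (φ : Pt ≃ₜ Pt) (M : Set Pt) :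
    SameMarkedEmbedding n G S D (D.map φ) M (φ '' M) :=
  ⟨φ, fun _ _ ↦ rfl, fun u _ v _ _ ↦ (D.arcBody_map φ u v).symm, rfl⟩

end Map

section Exchange

/-- Compatibility of the restrictions of `D` to consecutive windows, with no extra points: the
vertex `a` leaving the window and the vertex `b` entering it lie in the same face of the drawing of
the vertices strictly between them, which are those common to both windows. -/
def IsExchangeCompatible (n ω : ℕ) (G : SimpleGraph (Fin n)) (D : RawDrawing n) : Prop :=
  ∀ a b : Fin n, b.val = a.val + ω →
    D.pos a ∈ connectedComponentIn (drawingImage n G (Ioo a b) D)ᶜ (D.pos b)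

/-- The homeomorphisms `φ i` turn the drawing `D` of `G` into drawings of the window graphs `G_i`,
each obtained from the previous one by replacing the leaving vertex by the entering one. Vertices
are indexed from `0` and times from `1`, so that vertex `b` enters at time `b + 1`. -/
structure IsExchangeSequence (n ω : ℕ) (G : SimpleGraph (Fin n)) (D : RawDrawing n)
    (φ : ℕ → Pt ≃ₜ Pt) : Prop where
  eq_one : ∀ i ≤ ω, φ i = 1
  eqOn : ∀ i < n, EqOn (φ (i + 1)) (φ i) (drawingImage n G (window n ω i ∩ window n ω (i + 1)) D)
  exchange : ∀ a b : Fin n, b.val = a.val + ω → φ (b + 1) (D.pos b) = φ b (D.pos a)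

theorem window_inter_window_succ {a b : Fin n} (hab : b.val = a.val + ω) :
    window n ω b ∩ window n ω (b + 1) = Ioo a b := by
  ext v
  simp only [window, mem_inter_iff, mem_ofPred_eq, mem_Ioo, Fin.lt_def]
  omega

theorem IsExchangeCompatible.exists_homeomorph (hD : IsPlanarDrawing n G univ D)
    (hc : IsExchangeCompatible n ω G D) (m : ℕ) :
    ∃ h : Pt ≃ₜ Pt, ∀ a b : Fin n, a.val = m → b.val = a.val + ω →
      h (D.pos b) = D.pos a ∧ EqOn h id (drawingImage n G (Ioo a b) D) := by
  by_cases hm : ∃ a b : Fin n, a.val = m ∧ b.val = a.val + ω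
  · obtain ⟨a, b, ha, hab⟩ := hm
    obtain ⟨h, hh⟩ := exists_homeomorph_eqOn_of_mem_connectedComponentIn
      (hD.mono (subset_univ _)).isCompact_drawingImage.isClosed (hc a b hab)
    refine ⟨h, fun a' b' ha' hab' ↦ ?_⟩
    obtain rfl : a' = a := Fin.ext (ha'.trans ha.symm)
    obtain rfl : b' = b := Fin.ext (hab'.trans hab.symm)
    exact hh
  · exact ⟨1, fun a b ha hab ↦ absurd ⟨a, b, ha, hab⟩ hm⟩

theorem IsExchangeCompatible.exists_isExchangeSequence (hD : IsPlanarDrawing n G univ D)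
    (hc : IsExchangeCompatible n ω G D) : ∃ φ, IsExchangeSequence n ω G D φ := by
  choose ψ hψ using hc.exists_homeomorph hD
  -- `ψ m` moves vertex `m + ω` to vertex `m`; for `i ≤ ω` truncation makes `φ i` the empty product.
  let φ (i : ℕ) : Pt ≃ₜ Pt := ((List.range (i - ω)).map ψ).prod
  have φ_succ (a b : Fin n) (hab : b.val = a.val + ω) : φ (b + 1) = φ b * ψ a := by
    simp only [φ, hab, Nat.add_sub_cancel, Nat.add_right_comm _ ω 1, List.prod_range_succ]
  refine ⟨φ, fun i hi ↦ by simp [φ, hi], fun i hi ↦ ?_, fun a b hab ↦ ?_⟩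
  · obtain hiω | hωi := lt_or_ge i ω
    · simp [φ, Nat.sub_eq_zero_of_le, hiω, hiω.le, EqOn]
    · let a : Fin n := ⟨i - ω, by omega⟩
      let b : Fin n := ⟨i, hi⟩
      have hab : b.val = a.val + ω := (Nat.sub_add_cancel hωi).symm
      intro z hz
      change φ (b + 1) z = φ b z
      rw [window_inter_window_succ hab] at hz
      rw [φ_succ a b hab, Homeomorph.mul_apply, (hψ a a b rfl hab).2 hz, id]
  · rw [φ_succ a b hab, Homeomorph.mul_apply, (hψ a a b rfl hab).1]

theorem IsExchangeSequence.exists_apply_pos_eq {φ : ℕ → Pt ≃ₜ Pt}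
    (hφ : IsExchangeSequence n ω G D φ) {i : ℕ} (hi : i ≤ n) {v : Fin n} (hv : v ∈ window n ω i) :
    ∃ u : Fin n, u.val < ω ∧ φ i (D.pos v) = D.pos u := by
  induction i generalizing v with
  | zero => exact absurd hv.1 (by omega)
  | succ i ih =>
    obtain ⟨hvi, hiv⟩ := hv
    obtain hlt | heq : v.val < i ∨ v.val = i := by omega
    · have hv' : v ∈ window n ω i := ⟨hlt, by omega⟩
      rw [hφ.eqOn i hi (mem_drawingImage.2 (.inl ⟨v, ⟨hv', hvi, hiv⟩, rfl⟩))]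
      exact ih (by omega) hv'
    · obtain hvω | hωv := lt_or_ge v.val ω
      · exact ⟨v, hvω, by rw [hφ.eq_one _ (by omega), Homeomorph.one_apply]⟩
      · let a : Fin n := ⟨v - ω, by omega⟩
        have hav : v.val = a.val + ω := (Nat.sub_add_cancel hωv).symm
        rw [← heq, hφ.exchange a v hav, heq]
        exact ih (by omega) ⟨by omega, by omega⟩

/-- The realization whose drawings are the images of `D` under an exchange sequence. -/
noncomputable def IsExchangeSequence.realization {φ : ℕ → Pt ≃ₜ Pt}
    (hφ : IsExchangeSequence n ω G D φ) (hD : IsPlanarDrawing n G univ D)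
    (hP : ∀ u : Fin n, u.val < ω → D.pos u ∈ P) : Realization n ω G P where
  Γ i := D.map (φ i)
  planar i _ hi := (hD.mono (subset_univ _)).map (φ i) fun v hv ↦ by
    obtain ⟨u, hu, heq⟩ := hφ.exists_apply_pos_eq hi hv
    exact heq ▸ hP u hu
  pos_eq i hi hin v hv := by
    obtain ⟨j, rfl⟩ := Nat.exists_eq_add_of_le' (one_le_two.trans hi)
    exact hφ.eqOn j hin (mem_drawingImage.2 (.inl ⟨v, hv, rfl⟩))
  curve_eq i hi hin u hu v hv huv := by
    obtain ⟨j, rfl⟩ := Nat.exists_eq_add_of_le' (one_le_two.trans hi)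
    funext t
    exact hφ.eqOn j hin (mem_drawingImage.2
      (.inr ⟨u, hu, v, hv, huv, mem_image_of_mem _ (projIcc 0 1 zero_le_one t).2⟩))

theorem IsExchangeCompatible.isSupportingDrawing (hD : IsPlanarDrawing n G univ D)
    (hc : IsExchangeCompatible n ω G D) : IsSupportingDrawing n ω G D := by
  classical
  obtain ⟨φ, hφ⟩ := hc.exists_isExchangeSequence hD
  let P₀ : Finset Pt := ({u : Fin n | u.val < ω} : Finset (Fin n)).image D.pos
  have hP₀ : P₀.card ≤ ω := Finset.card_image_le.trans (by simp [Fin.card_filter_val_lt])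
  obtain ⟨P, hP₀P, hP⟩ := Infinite.exists_superset_card_eq P₀ ω hP₀
  have hposP : ∀ u : Fin n, u.val < ω → D.pos u ∈ P := fun u hu ↦
    hP₀P (Finset.mem_image_of_mem _ (by simpa using hu))
  have embedding : ∀ i, SameMarkedEmbedding n G (window n ω i) D (D.map (φ i)) ∅ ∅ := fun i ↦ by
    simpa only [image_empty] using sameMarkedEmbedding_map D (φ i) ∅
  exact ⟨hD, P, hP, hφ.realization hD hposP, fun i _ _ ↦ embedding i⟩

theorem IsSupportingDrawing.realizable (hD : IsSupportingDrawing n ω G D) : Realizable n ω 0 G :=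
  let ⟨_, P, hP, R, _⟩ := hD
  ⟨P, hP, ⟨R⟩⟩

end Exchange

theorem IsOuterplanarDrawing.pos_mem_unboundedRegion (hD : IsOuterplanarDrawing n G D) {w : Fin n}
    (hw : w ∉ S) : D.pos w ∈ unboundedRegion (drawingImage n G S D) :=
  mem_unboundedRegion_of_mem_closure (hD.1.mono (subset_univ S)).isCompact_drawingImage.isClosed
    (drawingImage_mono (subset_univ S)) (hD.2 w)
    (hD.1.pos_notMem_drawingImage (subset_univ S) (mem_univ w) hw)

theorem IsOuterplanarDrawing.isExchangeCompatible (hD : IsOuterplanarDrawing n G D) (ω : ℕ) :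
    IsExchangeCompatible n ω G D := fun a b _ ↦
  mem_connectedComponentIn_of_mem_unboundedRegion
    (hD.1.mono (subset_univ (Ioo a b))).isCompact_drawingImage.isBounded
    (hD.pos_mem_unboundedRegion (by simp)) (hD.pos_mem_unboundedRegion (by simp))

theorem outerplanar_minimal_story_realizable_general
    (n ω : ℕ) (G : SimpleGraph (Fin n)) (hout : Outerplanar n G) :
    Realizable n ω 0 G ∧
      ∀ Δ : RawDrawing n, IsOuterplanarDrawing n G Δ →
        IsSupportingDrawing n ω G Δ := by
  have supporting : ∀ Δ : RawDrawing n, IsOuterplanarDrawing n G Δ → IsSupportingDrawing n ω G Δ :=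
    fun Δ hΔ ↦ (hΔ.isExchangeCompatible ω).isSupportingDrawing hΔ.1
  obtain ⟨Δ, hΔ⟩ := hout
  exact ⟨(supporting Δ hΔ).realizable, supporting⟩

/-- **Theorem 3.** Every minimal graph story `S = (G, ω, τ)` with
`G` outerplanar is realizable; moreover, every outerplanar embedding of `G` is
a supporting embedding for `S`. -/
theorem outerplanar_minimal_story_realizable
    (n ω : ℕ) (G : SimpleGraph (Fin n))
    (hω : 1 ≤ ω) (hωn : ω ≤ n) (hvis : Visible n ω G)
    (hout : Outerplanar n G) :
    Realizable n ω 0 G ∧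
      ∀ Δ : RawDrawing n, IsOuterplanarDrawing n G Δ →
        IsSupportingDrawing n ω G Δ :=
  outerplanar_minimal_story_realizable_general n ω G hout

end GraphStories
end
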